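/- arXiv:2602.10936 — 4 statements merged into one kernel-verified Lean document; each statement's English description precedes it below -/
import Mathlib

section
/- Let A ∈ ℝ^{p×p}, B ∈ ℝ^{p×n_u}, C ∈ ℝ^{n_y×p}, D ∈ ℝ^{n_y×n_u}, K ∈ ℝ^{p×n_y}, and suppose sequences x : ℕ → ℝ^p, u : ℕ → ℝ^{n_u}, y : ℕ → ℝ^{n_y}, ε : ℕ → ℝ^{n_y} satisfy x(s+1) = A x(s) + B u(s) + K ε(s) and y(s) = C x(s) + D u(s) + ε(s) for all s with t ≤ s ≤ t+i. Then, with 𝒜 = A − K C and ℬ = B − K D, the i-step-ahead output satisfies y(t+i) = C 𝒜^i x(t) + D u(t+i) + ε(t+i) + C Σ_{j=0}^{i−1} 𝒜^{i−j−1} ( ℬ u(t+j) + K y(t+j) ). -/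
open Matrix Finset

/-!
Substituting `ε = y - C x - D u` into the state equation turns it into the recurrence
`x (s + 1) = 𝒜 x s + (ℬ u s + K y s)`, which is affine in the state with a known forcing term.
Unrolling it from `t` to `t + i` and applying the output equation at `t + i` gives the formula.
-/

theorem eq_pow_smul_add_sum_of_succ_eq_smul_add {M V : Type*} [Monoid M] [AddCommMonoid V]
    [DistribMulAction M V] {a : M} {x w : ℕ → V} {n : ℕ}
    (hx : ∀ k < n, x (k + 1) = a • x k + w k) :
    x n = a ^ n • x 0 + ∑ j ∈ range n, a ^ (n - j - 1) • w j := by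
  induction n with
  | zero => simp
  | succ n ih =>
    have smul_sum_eq : a • ∑ j ∈ range n, a ^ (n - j - 1) • w j =
        ∑ j ∈ range n, a ^ (n + 1 - j - 1) • w j := by
      rw [smul_sum]
      refine sum_congr rfl fun j hj ↦ ?_
      have exponent_eq : n + 1 - j - 1 = n - j - 1 + 1 := by grind
      rw [exponent_eq, pow_succ', mul_smul]
    calc
      x (n + 1) = a • x n + w n := hx n n.lt_succ_self
      _ = a • (a ^ n • x 0 + ∑ j ∈ range n, a ^ (n - j - 1) • w j) + w n := by
        rw [← ih fun k hk ↦ hx k (by lia)]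
      _ = a ^ (n + 1) • x 0 + (∑ j ∈ range n, a ^ (n + 1 - j - 1) • w j + w n) := by
        rw [smul_add, smul_sum_eq, smul_smul, ← pow_succ', add_assoc]
      _ = a ^ (n + 1) • x 0 + ∑ j ∈ range (n + 1), a ^ (n + 1 - j - 1) • w j := by
        simp [sum_range_succ]

section InnovationsForm

variable {R n m o : Type*} [Ring R] [Fintype n] [Fintype m] [Fintype o]
  {A : Matrix n n R} {B : Matrix n m R} {C : Matrix o n R} {D : Matrix o m R} {K : Matrix n o R}

theorem innovations_state_update_eq_of_output_eq {x : n → R} {u : m → R} {y ε : o → R}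
    (hout : y = C *ᵥ x + D *ᵥ u + ε) :
    A *ᵥ x + B *ᵥ u + K *ᵥ ε = (A - K * C) *ᵥ x + ((B - K * D) *ᵥ u + K *ᵥ y) := by
  simp only [hout, sub_mulVec, mulVec_add, ← mulVec_mulVec]
  abel

variable [DecidableEq n] {x : ℕ → n → R} {u : ℕ → m → R} {y ε : ℕ → o → R} {t i : ℕ}

open scoped Matrix.Module in
theorem istep_state_prediction
    (hdyn : ∀ s, t ≤ s → s < t + i → x (s + 1) = A *ᵥ x s + B *ᵥ u s + K *ᵥ ε s)
    (hout : ∀ s, t ≤ s → s < t + i → y s = C *ᵥ x s + D *ᵥ u s + ε s) :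
    x (t + i) = (A - K * C) ^ i *ᵥ x t +
      ∑ j ∈ range i, (A - K * C) ^ (i - j - 1) *ᵥ
        ((B - K * D) *ᵥ u (t + j) + K *ᵥ y (t + j)) := by
  have state_recurrence : ∀ k < i, x (t + (k + 1)) =
      (A - K * C) *ᵥ x (t + k) + ((B - K * D) *ᵥ u (t + k) + K *ᵥ y (t + k)) := fun k hk ↦
    (hdyn (t + k) (by lia) (by lia)).trans <|
      innovations_state_update_eq_of_output_eq (hout (t + k) (by lia) (by lia))
  -- `M *ᵥ v` is definitionally the scalar action `M • v` of `Matrix.Module.matrixModule`.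
  exact eq_pow_smul_add_sum_of_succ_eq_smul_add (a := A - K * C) (x := fun k ↦ x (t + k))
    (w := fun k ↦ (B - K * D) *ᵥ u (t + k) + K *ᵥ y (t + k)) state_recurrence

theorem istep_output_prediction_general
    (hdyn : ∀ s, t ≤ s → s < t + i → x (s + 1) = A *ᵥ x s + B *ᵥ u s + K *ᵥ ε s)
    (hout : ∀ s, t ≤ s → s ≤ t + i → y s = C *ᵥ x s + D *ᵥ u s + ε s) :
    y (t + i) = C *ᵥ ((A - K * C) ^ i *ᵥ x t) + D *ᵥ u (t + i) + ε (t + i) +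
      C *ᵥ ∑ j ∈ range i, (A - K * C) ^ (i - j - 1) *ᵥ
        ((B - K * D) *ᵥ u (t + j) + K *ᵥ y (t + j)) := by
  have state_eq := istep_state_prediction hdyn fun s hts hsi ↦ hout s hts hsi.le
  rw [hout (t + i) (by lia) le_rfl, state_eq, mulVec_add]
  abel

end InnovationsForm

/-- If the innovations-form state-space equations hold on `t ≤ s ≤ t+i`, then
with `𝒜 = A − KC` and `ℬ = B − KD`, the `i`-step-ahead output satisfies
`y(t+i) = C 𝒜^i x(t) + D u(t+i) + ε(t+i) + C ∑_{j=0}^{i−1} 𝒜^{i−j−1}(ℬ u(t+j) + K y(t+j))`. -/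
theorem istep_output_prediction
    (p nu ny : ℕ) (hp : 0 < p) (hnu : 0 < nu) (hny : 0 < ny)
    (A : Matrix (Fin p) (Fin p) ℝ) (B : Matrix (Fin p) (Fin nu) ℝ)
    (C : Matrix (Fin ny) (Fin p) ℝ) (D : Matrix (Fin ny) (Fin nu) ℝ)
    (K : Matrix (Fin p) (Fin ny) ℝ)
    (x : ℕ → Fin p → ℝ) (u : ℕ → Fin nu → ℝ)
    (y : ℕ → Fin ny → ℝ) (ε : ℕ → Fin ny → ℝ)
    (t i : ℕ)
    (hdyn : ∀ s, t ≤ s → s ≤ t + i →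
      x (s + 1) = A *ᵥ x s + B *ᵥ u s + K *ᵥ ε s)
    (hout : ∀ s, t ≤ s → s ≤ t + i →
      y s = C *ᵥ x s + D *ᵥ u s + ε s) :
    y (t + i) = C *ᵥ (((A - K * C) ^ i) *ᵥ x t) + D *ᵥ u (t + i) + ε (t + i) +
      C *ᵥ (∑ j ∈ Finset.range i,
        ((A - K * C) ^ (i - j - 1)) *ᵥ ((B - K * D) *ᵥ u (t + j) + K *ᵥ y (t + j))) := by
  exact istep_output_prediction_general (fun s hts hsi ↦ hdyn s hts hsi.le) hout
end

section
/- Let C ∈ ℝ^{n_y × m n_z} and D ∈ ℝ^{n_y × n_u} be one-step predictor matrices; define A, B, K from C and D by the shift construction; set 𝒜 = A − K C, ℬ = B − K D; build the observability and Markov-parameter matrices Φ^p, Φ^u, Φ^y from A, B, C, D, K with state dimension p = m n_z; and set P = (I − Φ^y)^{−1} Φ^p and F = (I − Φ^y)^{−1} Φ^u. Then for all vectors u(t−m),…,u(t+h−1) ∈ ℝ^{n_u}, y(t−m),…,y(t+h−1) ∈ ℝ^{n_y}, ε(t),…,ε(t+h−1) ∈ ℝ^{n_y}, with z_p(t+i)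 the stacked input/output histories for i = 0,…,h, u_f(t) = (u(t),…,u(t+h−1)), y_f(t) = (y(t),…,y(t+h−1)), ε_f(t) = (ε(t),…,ε(t+h−1)), and e_f(t) = (I − Φ^y)^{−1} ε_f(t), the trajectory predictor equation y_f(t) = P z_p(t) + F u_f(t) + e_f(t) holds if and only if, for every i = 0,…,h−1, both z_p(t+i+1) = A z_p(t+i) + B u(t+i) + K ε(t+i) and y(t+i) = C z_p(t+i) + D u(t+i) + ε(t+i) hold. -/
open Matrix Finset

/-- Stacked input/output history: `hist nu ny m u y i` is `z_p(t+i)`, the stack of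
`z(i), …, z(i+m−1)` where `z(k) = (u(k), y(k))` (index `k` stands for time `t − m + k`). -/
def hist (nu ny m : ℕ) (u : ℕ → Fin nu → ℝ) (y : ℕ → Fin ny → ℝ) (i : ℕ) :
    (Fin m × (Fin nu ⊕ Fin ny)) → ℝ :=
  fun pr => Sum.elim (u (i + (pr.1 : ℕ))) (y (i + (pr.1 : ℕ))) pr.2

/-- Shift construction: `A` has first `(m−1)n_z` rows `[0 I]`, next `n_u` rows zero, and
last `n_y` rows equal to `C`. -/
def shiftA (nu ny m : ℕ) (C : Matrix (Fin ny) (Fin m × (Fin nu ⊕ Fin ny)) ℝ) :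
    Matrix (Fin m × (Fin nu ⊕ Fin ny)) (Fin m × (Fin nu ⊕ Fin ny)) ℝ :=
  fun p q =>
    if hp : (p.1 : ℕ) + 1 < m then (if q = (⟨(p.1 : ℕ) + 1, hp⟩, p.2) then 1 else 0)
    else Sum.elim (fun _ : Fin nu => (0 : ℝ)) (fun b : Fin ny => C b q) p.2

/-- Shift construction: `B` is the vertical stack of `0`, `I_{n_u}`, and `D`. -/
def shiftB (nu ny m : ℕ) (D : Matrix (Fin ny) (Fin nu) ℝ) :
    Matrix (Fin m × (Fin nu ⊕ Fin ny)) (Fin nu) ℝ :=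
  fun p a =>
    if (p.1 : ℕ) + 1 = m then
      Sum.elim (fun a' : Fin nu => if a' = a then (1 : ℝ) else 0) (fun b : Fin ny => D b a) p.2
    else 0

/-- Shift construction: `K` is the vertical stack of `0` and `I_{n_y}`. -/
def shiftK (nu ny m : ℕ) : Matrix (Fin m × (Fin nu ⊕ Fin ny)) (Fin ny) ℝ :=
  fun p b =>
    if (p.1 : ℕ) + 1 = m then
      Sum.elim (fun _ : Fin nu => (0 : ℝ)) (fun b' : Fin ny => if b' = b then (1 : ℝ) else 0) p.2
    else 0

/-- Observability matrix `Φ^p`: vertical stack of `C`, `C𝒜`, …, `C𝒜^{h−1}`. -/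
noncomputable def obsMat (σ : Type) (ny h : ℕ) (C : Matrix (Fin ny) σ ℝ)
    (𝒜 : Matrix σ σ ℝ) [Fintype σ] [DecidableEq σ] : Matrix (Fin h × Fin ny) σ ℝ :=
  fun q k => (C * 𝒜 ^ (q.1 : ℕ)) q.2 k

/-- Markov-parameter matrix `Φ^u`: block lower triangular with diagonal blocks `D` and
`(i,j)` blocks `C 𝒜^{i−j−1} ℬ` for `i > j`. -/
noncomputable def markovU (σ : Type) (nu ny h : ℕ) (C : Matrix (Fin ny) σ ℝ)
    (𝒜 : Matrix σ σ ℝ) (ℬ : Matrix σ (Fin nu) ℝ) (D : Matrix (Fin ny) (Fin nu) ℝ)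
    [Fintype σ] [DecidableEq σ] : Matrix (Fin h × Fin ny) (Fin h × Fin nu) ℝ :=
  fun q r =>
    if (q.1 : ℕ) = (r.1 : ℕ) then D q.2 r.2
    else if (r.1 : ℕ) < (q.1 : ℕ) then (C * 𝒜 ^ ((q.1 : ℕ) - (r.1 : ℕ) - 1) * ℬ) q.2 r.2
    else 0

/-- Markov-parameter matrix `Φ^y`: strictly block lower triangular with
`(i,j)` blocks `C 𝒜^{i−j−1} K` for `i > j`. -/
noncomputable def markovY (σ : Type) (ny h : ℕ) (C : Matrix (Fin ny) σ ℝ)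
    (𝒜 : Matrix σ σ ℝ) (K : Matrix σ (Fin ny) ℝ) [Fintype σ] [DecidableEq σ] :
    Matrix (Fin h × Fin ny) (Fin h × Fin ny) ℝ :=
  fun q r =>
    if (r.1 : ℕ) < (q.1 : ℕ) then (C * 𝒜 ^ ((q.1 : ℕ) - (r.1 : ℕ) - 1) * K) q.2 r.2
    else 0

/-!
Eliminating the innovation `ε = y - C z - D u` from the state equation turns
`z⁺ = A z + B u + K ε` into `z⁺ = 𝒜 z + ℬ u + K y`. For the shift construction the latter holds for
every input/output sequence, because `𝒜`, `ℬ`, `K` merely drop the oldest sample of the history and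
append the newest one. Solving this recursion shows that the stacked one-step predictions
`C z + D u` are `Φp z₀ + Φu uf + Φy yf`. Hence the output equations say
`(1 - Φy) yf = Φp z₀ + Φu uf + εf`, and `1 - Φy` is invertible, being block unitriangular.
-/

section LinearAlgebra

variable {R ι κ α σ : Type*}

theorem sum_fin_ite_lt_eq_sum_range [AddCommMonoid R] {n i : ℕ} (hi : i ≤ n) (f : ℕ → R) :
    ∑ j : Fin n, (if (j : ℕ) < i then f j else 0) = ∑ j ∈ range i, f j := by
  rw [Fin.sum_univ_eq_sum_range (fun j => if j < i then f j else 0) n, ← sum_filter]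
  congr 1
  ext j
  simp only [mem_filter, mem_range]
  lia

theorem det_one_sub_of_strict_blockTriangular [CommRing R] [Fintype ι] [DecidableEq ι]
    [LinearOrder α] {N : Matrix ι ι R} {b : ι → α} (hN : ∀ i j, b j ≤ b i → N i j = 0) :
    (1 - N).det = 1 := by
  have hN_lt : N.BlockTriangular b := fun i j hij => hN i j hij.le
  have diagonal_block (k : α) : (1 - N).toSquareBlock b k = 1 := by
    ext i j
    have hij : N i j = 0 := hN i j (j.2.trans i.2.symm).le
    simp [toSquareBlock, toSquareBlockProp, hij, one_apply, Subtype.ext_iff]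
  rw [(blockTriangular_one.sub hN_lt).det]
  simp only [diagonal_block, det_one, prod_const_one]

theorem eq_inv_mulVec_iff [CommRing R] [Fintype ι] [DecidableEq ι] {N : Matrix ι ι R}
    (hN : IsUnit N.det) {x b : ι → R} : x = N⁻¹ *ᵥ b ↔ N *ᵥ x = b := by
  constructor
  · rintro rfl
    rw [mulVec_mulVec, mul_nonsing_inv _ hN, one_mulVec]
  · rintro rfl
    rw [mulVec_mulVec, nonsing_inv_mul _ hN, one_mulVec]

theorem variation_of_constants [Semiring R] [Fintype σ] [DecidableEq σ] {A : Matrix σ σ R}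
    {x w : ℕ → σ → R} {n : ℕ} (hx : ∀ i < n, x (i + 1) = A *ᵥ x i + w i) :
    x n = A ^ n *ᵥ x 0 + ∑ j ∈ range n, A ^ (n - j - 1) *ᵥ w j := by
  induction n with
  | zero => simp
  | succ n ih =>
    have exponent_succ : ∀ j ∈ range n, A ^ (n + 1 - j - 1) *ᵥ w j
        = A *ᵥ A ^ (n - j - 1) *ᵥ w j := by
      intro j hj
      have hjn : j < n := mem_range.1 hj
      rw [mulVec_mulVec, ← pow_succ', show n + 1 - j - 1 = n - j - 1 + 1 by lia]
    rw [hx n n.lt_succ_self, ih fun i hi => hx i (hi.trans n.lt_succ_self), sum_range_succ,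
      sum_congr rfl exponent_succ, mulVec_add, mulVec_mulVec, ← pow_succ', ← mulVec_sum, add_assoc]
    simp

theorem innovation_form_eq_predictor_form [Ring R] [Fintype σ] [Fintype ι] [Fintype κ]
    (A : Matrix σ σ R) (B : Matrix σ κ R) (C : Matrix ι σ R) (D : Matrix ι κ R) (K : Matrix σ ι R)
    (x : σ → R) (u : κ → R) (y : ι → R) :
    A *ᵥ x + B *ᵥ u + K *ᵥ (y - (C *ᵥ x + D *ᵥ u))
      = (A - K * C) *ᵥ x + ((B - K * D) *ᵥ u + K *ᵥ y) := by
  simp only [sub_mulVec, mulVec_sub, mulVec_add, ← mulVec_mulVec]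
  abel

end LinearAlgebra

/-- The stacked vector `(v 0, …, v (h - 1))`, such as `u_f`, `y_f` and `ε_f` in the trajectory
predictor. Its index set is `Fin h × ι`, matching the rows and columns of `obsMat`, `markovU`
and `markovY`. -/
def stack {R ι : Type*} (h : ℕ) (v : ℕ → ι → R) : Fin h × ι → R :=
  fun q => v q.1 q.2

theorem stack_add {R ι : Type*} [Add R] (h : ℕ) (v w : ℕ → ι → R) :
    stack h v + stack h w = stack h fun i => v i + w i :=
  rfl

theorem stack_inj {R ι : Type*} {h : ℕ} {v w : ℕ → ι → R} :
    stack h v = stack h w ↔ ∀ i < h, v i = w i := by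
  constructor
  · intro hvw i hi
    ext b
    exact congrFun hvw (⟨i, hi⟩, b)
  · intro hvw
    ext q
    exact congrFun (hvw q.1 q.1.2) q.2

section Predictor

variable {σ : Type} [Fintype σ] [DecidableEq σ] {nu ny h : ℕ} {C : Matrix (Fin ny) σ ℝ}
  {𝒜 : Matrix σ σ ℝ} {ℬ : Matrix σ (Fin nu) ℝ} {D : Matrix (Fin ny) (Fin nu) ℝ}
  {K : Matrix σ (Fin ny) ℝ}

theorem obsMat_mulVec (x : σ → ℝ) :
    obsMat σ ny h C 𝒜 *ᵥ x = stack h fun i => C *ᵥ 𝒜 ^ i *ᵥ x := by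
  ext q
  simp only [stack, mulVec_mulVec]
  rfl

theorem markovU_mulVec_stack (u : ℕ → Fin nu → ℝ) :
    markovU σ nu ny h C 𝒜 ℬ D *ᵥ stack h u
      = stack h fun i => D *ᵥ u i + C *ᵥ ∑ j ∈ range i, 𝒜 ^ (i - j - 1) *ᵥ ℬ *ᵥ u j := by
  ext ⟨i, b⟩
  have block_row (j : Fin h) : ∑ a, markovU σ nu ny h C 𝒜 ℬ D (i, b) (j, a) * u j a
      = (if i = j then (D *ᵥ u j) b else 0)
        + if (j : ℕ) < i then ((C * 𝒜 ^ ((i : ℕ) - j - 1) * ℬ) *ᵥ u j) b else 0 := by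
    rcases eq_or_ne i j with rfl | hij
    · simp [markovU, mulVec, dotProduct]
    · simp [markovU, mulVec, dotProduct, hij, Fin.val_inj, ite_mul, sum_ite_irrel]
  calc (markovU σ nu ny h C 𝒜 ℬ D *ᵥ stack h u) (i, b)
      = ∑ j : Fin h, ∑ a, markovU σ nu ny h C 𝒜 ℬ D (i, b) (j, a) * u j a :=
        Fintype.sum_prod_type _
    _ = (D *ᵥ u i) b + ∑ j ∈ range i, ((C * 𝒜 ^ ((i : ℕ) - j - 1) * ℬ) *ᵥ u j) b := by
        simp only [block_row, sum_add_distrib, sum_ite_eq, mem_univ, if_true]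
        rw [sum_fin_ite_lt_eq_sum_range i.2.le
          fun j => ((C * 𝒜 ^ ((i : ℕ) - j - 1) * ℬ) *ᵥ u j) b]
    _ = _ := by
        simp only [stack, Pi.add_apply, mulVec_sum, Finset.sum_apply, mulVec_mulVec,
          Matrix.mul_assoc]

theorem markovY_eq_markovU : markovY σ ny h C 𝒜 K = markovU σ ny ny h C 𝒜 K 0 := by
  ext q r
  simp only [markovY, markovU, Matrix.zero_apply]
  split_ifs <;> first | rfl | lia

theorem det_one_sub_markovY : (1 - markovY σ ny h C 𝒜 K).det = 1 :=
  det_one_sub_of_strict_blockTriangular (b := fun q => OrderDual.toDual q.1)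
    fun _ _ hqr => if_neg (not_lt.2 hqr)

theorem stack_output_eq_of_predictor_form {z : ℕ → σ → ℝ} {u : ℕ → Fin nu → ℝ}
    {y : ℕ → Fin ny → ℝ} (hz : ∀ i < h, z (i + 1) = 𝒜 *ᵥ z i + (ℬ *ᵥ u i + K *ᵥ y i)) :
    stack h (fun i => C *ᵥ z i + D *ᵥ u i)
      = obsMat σ ny h C 𝒜 *ᵥ z 0 + markovU σ nu ny h C 𝒜 ℬ D *ᵥ stack h u
        + markovY σ ny h C 𝒜 K *ᵥ stack h y := by
  rw [markovY_eq_markovU, obsMat_mulVec, markovU_mulVec_stack, markovU_mulVec_stack, stack_add,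
    stack_add]
  refine stack_inj.2 fun i hi => ?_
  rw [variation_of_constants fun j hj => hz j (hj.trans hi)]
  simp only [mulVec_add, sum_add_distrib, zero_mulVec]
  abel

theorem trajectory_predictor_iff_output_eq {z : ℕ → σ → ℝ} {u : ℕ → Fin nu → ℝ}
    {y ε : ℕ → Fin ny → ℝ} (hz : ∀ i < h, z (i + 1) = 𝒜 *ᵥ z i + (ℬ *ᵥ u i + K *ᵥ y i)) :
    stack h y = ((1 - markovY σ ny h C 𝒜 K)⁻¹ * obsMat σ ny h C 𝒜) *ᵥ z 0
        + ((1 - markovY σ ny h C 𝒜 K)⁻¹ * markovU σ nu ny h C 𝒜 ℬ D) *ᵥ stack h u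
        + (1 - markovY σ ny h C 𝒜 K)⁻¹ *ᵥ stack h ε
      ↔ ∀ i < h, y i = C *ᵥ z i + D *ᵥ u i + ε i := by
  have isUnit_det : IsUnit (1 - markovY σ ny h C 𝒜 K).det := by
    rw [det_one_sub_markovY]
    exact isUnit_one
  rw [← stack_inj, ← stack_add, stack_output_eq_of_predictor_form hz, ← mulVec_mulVec,
    ← mulVec_mulVec, ← mulVec_add, ← mulVec_add, eq_inv_mulVec_iff isUnit_det, sub_mulVec,
    one_mulVec, sub_eq_iff_eq_add, add_right_comm]

end Predictor

section Shift

variable {nu ny m : ℕ}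

theorem shiftA_mulVec_apply (C : Matrix (Fin ny) (Fin m × (Fin nu ⊕ Fin ny)) ℝ)
    (x : Fin m × (Fin nu ⊕ Fin ny) → ℝ) (k : Fin m) (s : Fin nu ⊕ Fin ny) :
    (shiftA nu ny m C *ᵥ x) (k, s)
      = if hk : (k : ℕ) + 1 < m then x (⟨k + 1, hk⟩, s) else Sum.elim 0 (C *ᵥ x) s := by
  by_cases hk : (k : ℕ) + 1 < m
  · simp [shiftA, mulVec, dotProduct, hk]
  · cases s <;> simp [shiftA, mulVec, dotProduct, hk]

theorem shiftB_mulVec_apply (D : Matrix (Fin ny) (Fin nu) ℝ) (v : Fin nu → ℝ) (k : Fin m)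
    (s : Fin nu ⊕ Fin ny) :
    (shiftB nu ny m D *ᵥ v) (k, s) = if (k : ℕ) + 1 = m then Sum.elim v (D *ᵥ v) s else 0 := by
  by_cases hk : (k : ℕ) + 1 = m
  · cases s <;> simp [shiftB, mulVec, dotProduct, hk]
  · simp [shiftB, mulVec, dotProduct, hk]

theorem shiftK_mulVec_apply (e : Fin ny → ℝ) (k : Fin m) (s : Fin nu ⊕ Fin ny) :
    (shiftK nu ny m *ᵥ e) (k, s)
      = if (k : ℕ) + 1 = m then Sum.elim (0 : Fin nu → ℝ) e s else 0 := by
  by_cases hk : (k : ℕ) + 1 = m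
  · cases s <;> simp [shiftK, mulVec, dotProduct, hk]
  · simp [shiftK, mulVec, dotProduct, hk]

theorem hist_succ (C : Matrix (Fin ny) (Fin m × (Fin nu ⊕ Fin ny)) ℝ)
    (D : Matrix (Fin ny) (Fin nu) ℝ) (u : ℕ → Fin nu → ℝ) (y : ℕ → Fin ny → ℝ) (i : ℕ) :
    hist nu ny m u y (i + 1)
      = shiftA nu ny m C *ᵥ hist nu ny m u y i + shiftB nu ny m D *ᵥ u (m + i)
        + shiftK nu ny m *ᵥ (y (m + i) - (C *ᵥ hist nu ny m u y i + D *ᵥ u (m + i))) := by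
  ext ⟨k, s⟩
  simp only [Pi.add_apply, shiftA_mulVec_apply, shiftB_mulVec_apply, shiftK_mulVec_apply]
  rcases (Nat.succ_le_of_lt k.2).lt_or_eq with hk | hk
  · have time_eq : i + 1 + (k : ℕ) = i + (k + 1) := by lia
    simp [hist, hk, hk.ne, time_eq]
  · have time_eq : i + 1 + (k : ℕ) = m + i := by lia
    cases s <;> simp [hist, ← hk, time_eq]

end Shift

/-- **Theorem 1.** With the state-space predictor `P = (I−Φ^y)⁻¹ Φ^p`,
`F = (I−Φ^y)⁻¹ Φ^u` built from the one-step fit `C, D` via the shift construction, and with the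
index `k` of `u, y` standing for time `t − m + k` and the index `k` of `ε` standing for time
`t + k`, the trajectory predictor equation `y_f(t) = P z_p(t) + F u_f(t) + e_f(t)` with
`e_f(t) = (I−Φ^y)⁻¹ ε_f(t)` holds if and only if the state-space equations
`z_p(t+i+1) = A z_p(t+i) + B u(t+i) + K ε(t+i)` and `y(t+i) = C z_p(t+i) + D u(t+i) + ε(t+i)`
hold for `i = 0, …, h−1`. -/
theorem state_space_predictor_iff_state_space
    (nu ny m h : ℕ) (hnu : 0 < nu) (hny : 0 < ny) (hm : 0 < m) (hh : 0 < h)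
    (C : Matrix (Fin ny) (Fin m × (Fin nu ⊕ Fin ny)) ℝ)
    (D : Matrix (Fin ny) (Fin nu) ℝ)
    (u : ℕ → Fin nu → ℝ) (y : ℕ → Fin ny → ℝ) (ε : ℕ → Fin ny → ℝ) :
    letI A := shiftA nu ny m C
    letI B := shiftB nu ny m D
    letI K := shiftK nu ny m
    letI 𝒜 := A - K * C
    letI ℬ := B - K * D
    letI Φp := obsMat (Fin m × (Fin nu ⊕ Fin ny)) ny h C 𝒜
    letI Φu := markovU (Fin m × (Fin nu ⊕ Fin ny)) nu ny h C 𝒜 ℬ D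
    letI Φy := markovY (Fin m × (Fin nu ⊕ Fin ny)) ny h C 𝒜 K
    letI P := (1 - Φy)⁻¹ * Φp
    letI F := (1 - Φy)⁻¹ * Φu
    letI uf : Fin h × Fin nu → ℝ := fun r => u (m + (r.1 : ℕ)) r.2
    letI yf : Fin h × Fin ny → ℝ := fun q => y (m + (q.1 : ℕ)) q.2
    letI εf : Fin h × Fin ny → ℝ := fun q => ε (q.1 : ℕ) q.2
    letI ef := (1 - Φy)⁻¹ *ᵥ εf
    ((yf = P *ᵥ hist nu ny m u y 0 + F *ᵥ uf + ef)
    ↔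
    (∀ i : ℕ, i < h →
      (hist nu ny m u y (i + 1) =
          A *ᵥ hist nu ny m u y i + B *ᵥ u (m + i) + K *ᵥ ε i ∧
        y (m + i) = C *ᵥ hist nu ny m u y i + D *ᵥ u (m + i) + ε i))) := by
  let z := hist nu ny m u y
  let A := shiftA nu ny m C
  let B := shiftB nu ny m D
  let K := shiftK nu ny m
  have predictor_form (i : ℕ) :
      z (i + 1) = (A - K * C) *ᵥ z i + ((B - K * D) *ᵥ u (m + i) + K *ᵥ y (m + i)) :=
    (hist_succ C D u y i).trans (innovation_form_eq_predictor_form ..)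
  have state_eq_of_output_eq (i : ℕ) (output_eq : y (m + i) = C *ᵥ z i + D *ᵥ u (m + i) + ε i) :
      z (i + 1) = A *ᵥ z i + B *ᵥ u (m + i) + K *ᵥ ε i := by
    rw [← sub_eq_of_eq_add' output_eq]
    exact hist_succ C D u y i
  have predictor_iff_output_eq :=
    trajectory_predictor_iff_output_eq (h := h) (C := C) (D := D) (ε := ε)
      (u := fun i => u (m + i)) (y := fun i => y (m + i)) fun i _ => predictor_form i
  exact predictor_iff_output_eq.trans <|
    forall₂_congr fun i _ => (and_iff_right_of_imp (state_eq_of_output_eq i)).symm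
end

section
/- Suppose Z̃ = L₁₁ Q₁, Ũ = L₂₁ Q₁ + L₂₂ Q₂, and Ỹ = L₃₁ Q₁ + L₃₂ Q₂ + L₃₃ Q₃, where L₁₁ ∈ ℝ^{m n_z × m n_z} is invertible, L₂₂ ∈ ℝ^{h n_u × h n_u} is invertible and block lower triangular in h×h blocks of size n_u × n_u, L₂₁ ∈ ℝ^{h n_u × m n_z}, L₃₁ ∈ ℝ^{h n_y × m n_z}, L₃₂ ∈ ℝ^{h n_y × h n_u}, L₃₃ ∈ ℝ^{h n_y × h n_y}, and Q₁, Q₂, Q₃ have orthonormal rows with Q_i Q_iᵀ = I and Q_i Q_jᵀ = 0 for i ≠ j. Let BLT(L₃₂) denote L₃₂ with its (i,j) blocks (of size n_y × n_u) replaced by zero for all j > i, and define F_mlt = BLT(L₃₂) L₂₂^{−1} and P_mlt = (L₃₁ − F_mlt L₂₁) L₁₁^{−1}. Then F_mlt is block lower triangular, and (P_mlt, F_mlt) is the unique minimizer of ‖Ỹ − P Z̃ − F Ũ‖_Fro² over all P ∈ ℝ^{h n_y × m n_z} and all block-lower-triangular F ∈ ℝ^{h n_y × h n_u}. -/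
open Matrix Finset

/-- A matrix in `ℝ^{h n_y × h n_u}` (blocks of size `n_y × n_u`) is block lower triangular if
its `(i,j)` block is zero whenever `j > i`. -/
def BLTyu (nu ny h : ℕ) (F : Matrix (Fin h × Fin ny) (Fin h × Fin nu) ℝ) : Prop :=
  ∀ p : Fin h × Fin ny, ∀ q : Fin h × Fin nu, (p.1 : ℕ) < (q.1 : ℕ) → F p q = 0

/-- A matrix in `ℝ^{h n_u × h n_u}` (blocks of size `n_u × n_u`) is block lower triangular if
its `(i,j)` block is zero whenever `j > i`. -/
def BLTuu (nu h : ℕ) (L : Matrix (Fin h × Fin nu) (Fin h × Fin nu) ℝ) : Prop :=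
  ∀ p q : Fin h × Fin nu, (p.1 : ℕ) < (q.1 : ℕ) → L p q = 0

/-- `BLT(L₃₂)`: zero out the strictly block upper triangular part of `L₃₂`. -/
def bltOf (nu ny h : ℕ) (L : Matrix (Fin h × Fin ny) (Fin h × Fin nu) ℝ) :
    Matrix (Fin h × Fin ny) (Fin h × Fin nu) ℝ :=
  fun p q => if (p.1 : ℕ) < (q.1 : ℕ) then 0 else L p q

/-!
In the orthonormal rows of `Q₁` and `Q₂`, with `B := BLT(L₃₂)`, every residual splits as
`Y - P Z - F U = ((L₃₂ - B) Q₂ + L₃₃ Q₃) + ((L₃₁ - P L₁₁ - F L₂₁) Q₁ + (B - F L₂₂) Q₂)`.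
The first summand does not depend on `(P, F)`. For block lower triangular `F` it is orthogonal to
the second one, because `B - F L₂₂` is again block lower triangular whereas `L₃₂ - B` lives strictly
above the block diagonal. The second summand vanishes exactly at `(P_mlt, F_mlt)`, by back
substitution, so the Pythagorean theorem gives the unique minimizer.
-/

section BlockLowerTriangular

variable {l m n α R : Type*}

/-- Block lower triangularity of a possibly rectangular matrix, the block indices of rows and
columns being given by `b` and `c`. Mathlib's `Matrix.BlockTriangular` is the upper triangular
version for square matrices. -/
def IsBlockLowerTriangular [LT α] [Zero R] (b : m → α) (c : n → α) (M : Matrix m n R) : Prop :=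
  ∀ i j, b i < c j → M i j = 0

/-- The block lower triangular part `BLT(M)` of a matrix, the block indices of rows and columns
being given by `b` and `c`. -/
def blockLowerPart [LT α] [DecidableLT α] [Zero R] (b : m → α) (c : n → α)
    (M : Matrix m n R) : Matrix m n R :=
  fun i j => if b i < c j then 0 else M i j

theorem isBlockLowerTriangular_blockLowerPart [LT α] [DecidableLT α] [Zero R]
    (b : m → α) (c : n → α) (M : Matrix m n R) :
    IsBlockLowerTriangular b c (blockLowerPart b c M) :=
  fun _ _ hij => if_pos hij

theorem IsBlockLowerTriangular.sub [LT α] [SubNegZeroMonoid R]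
    {b : m → α} {c : n → α} {M N : Matrix m n R}
    (hM : IsBlockLowerTriangular b c M) (hN : IsBlockLowerTriangular b c N) :
    IsBlockLowerTriangular b c (M - N) :=
  fun i j hij => by rw [Matrix.sub_apply, hM i j hij, hN i j hij, sub_zero]

theorem IsBlockLowerTriangular.mul [LinearOrder α] [Fintype m] [NonUnitalNonAssocSemiring R]
    {a : l → α} {b : m → α} {c : n → α} {M : Matrix l m R} {N : Matrix m n R}
    (hM : IsBlockLowerTriangular a b M) (hN : IsBlockLowerTriangular b c N) :
    IsBlockLowerTriangular a c (M * N) := by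
  intro i j hij
  rw [Matrix.mul_apply]
  refine Finset.sum_eq_zero fun k _ => ?_
  rcases lt_or_ge (a i) (b k) with hik | hki
  · rw [hM i k hik, zero_mul]
  · rw [hN k j (hki.trans_lt hij), mul_zero]

theorem IsBlockLowerTriangular.inv [LinearOrder α] [Fintype m] [DecidableEq m] [CommRing R]
    {b : m → α} {M : Matrix m m R} (hM : IsBlockLowerTriangular b b M) (hM_unit : IsUnit M) :
    IsBlockLowerTriangular b b M⁻¹ := by
  have := hM_unit.invertible
  have hM_dual : M.BlockTriangular (OrderDual.toDual ∘ b) := fun i j hij => hM i j hij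
  exact fun _ _ hij => Matrix.blockTriangular_inv_of_blockTriangular hM_dual hij

theorem trace_sub_blockLowerPart_mul_conjTranspose [LT α] [DecidableLT α] [Fintype m] [Fintype n]
    [NonUnitalNonAssocRing R] [StarAddMonoid R]
    {b : m → α} {c : n → α} (M : Matrix m n R) {N : Matrix m n R}
    (hN : IsBlockLowerTriangular b c N) : trace ((M - blockLowerPart b c M) * Nᴴ) = 0 := by
  refine Finset.sum_eq_zero fun i _ => Finset.sum_eq_zero fun j _ => ?_
  by_cases hij : b i < c j
  · simp [hN i j hij]
  · simp [blockLowerPart, hij]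

end BlockLowerTriangular

theorem trace_conjTranspose_mul_self_lt_add {m n R : Type*} [Fintype m] [Fintype n]
    [CommRing R] [NoZeroDivisors R] [PartialOrder R] [StarRing R] [StarOrderedRing R]
    {A B : Matrix m n R} (hB : B ≠ 0) (hAB : trace (A * Bᴴ) = 0) :
    trace (Aᴴ * A) < trace ((A + B)ᴴ * (A + B)) := by
  have hBA : trace (Bᴴ * A) = 0 := by rw [trace_mul_comm, hAB]
  have hAB_conj : trace (Aᴴ * B) = 0 := by
    rw [← star_eq_zero, ← trace_conjTranspose, conjTranspose_mul, conjTranspose_conjTranspose, hBA]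
  have hB_pos : 0 < trace (Bᴴ * B) :=
    (posSemidef_conjTranspose_mul_self B).trace_nonneg.lt_of_ne'
      (trace_conjTranspose_mul_self_eq_zero_iff.not.2 hB)
  calc trace (Aᴴ * A) < trace (Aᴴ * A) + trace (Bᴴ * B) := lt_add_of_pos_right _ hB_pos
    _ = trace ((A + B)ᴴ * (A + B)) := by
      simp only [conjTranspose_add, Matrix.add_mul, Matrix.mul_add, trace_add, hAB_conj, hBA,
        add_zero, zero_add]

section OrthonormalRows

variable {ι κ o τ R : Type*} [Fintype ι] [Fintype κ] [Fintype τ] [DecidableEq κ]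
  [Ring R] [StarRing R] {Q1 : Matrix ι τ R} {Q2 : Matrix κ τ R}

theorem eq_zero_and_eq_zero_of_mul_add_mul_eq_zero [DecidableEq ι]
    (hQ11 : Q1 * Q1ᴴ = 1) (hQ22 : Q2 * Q2ᴴ = 1) (hQ12 : Q1 * Q2ᴴ = 0) (hQ21 : Q2 * Q1ᴴ = 0)
    {A : Matrix o ι R} {B : Matrix o κ R} (hAB : A * Q1 + B * Q2 = 0) : A = 0 ∧ B = 0 := by
  constructor
  · simpa [Matrix.add_mul, Matrix.mul_assoc, hQ11, hQ21] using congrArg (· * Q1ᴴ) hAB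
  · simpa [Matrix.add_mul, Matrix.mul_assoc, hQ22, hQ12] using congrArg (· * Q2ᴴ) hAB

theorem mul_add_mul_conjTranspose_of_orthonormal
    (hQ22 : Q2 * Q2ᴴ = 1) (hQ21 : Q2 * Q1ᴴ = 0) {E : Matrix o τ R}
    (hE1 : E * Q1ᴴ = 0) (hE2 : E * Q2ᴴ = 0)
    (A : Matrix o ι R) (B C : Matrix o κ R) :
    (C * Q2 + E) * (A * Q1 + B * Q2)ᴴ = C * Bᴴ := by
  have hQ1 : (C * Q2 + E) * Q1ᴴ = 0 := by
    rw [Matrix.add_mul, Matrix.mul_assoc, hQ21, hE1, Matrix.mul_zero, add_zero]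
  have hQ2 : (C * Q2 + E) * Q2ᴴ = C := by
    rw [Matrix.add_mul, Matrix.mul_assoc, hQ22, hE2, Matrix.mul_one, add_zero]
  rw [conjTranspose_add, conjTranspose_mul, conjTranspose_mul, Matrix.mul_add,
    ← Matrix.mul_assoc, ← Matrix.mul_assoc, hQ1, hQ2, Matrix.zero_mul, zero_add]

end OrthonormalRows

theorem triangular_system_iff_eq_mul_inv {ι κ o R : Type*} [Fintype ι] [DecidableEq ι] [Fintype κ]
    [DecidableEq κ] [CommRing R] {L11 : Matrix ι ι R} {L22 : Matrix κ κ R}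
    (hL11 : IsUnit L11) (hL22 : IsUnit L22) (L21 : Matrix κ ι R)
    (A P : Matrix o ι R) (B F : Matrix o κ R) :
    A - P * L11 - F * L21 = 0 ∧ B - F * L22 = 0 ↔
      P = (A - B * L22⁻¹ * L21) * L11⁻¹ ∧ F = B * L22⁻¹ := by
  have := hL11.invertible
  have := hL22.invertible
  rw [sub_right_comm, sub_eq_zero, sub_eq_zero, ← mul_inv_eq_iff_eq_mul_of_invertible,
    ← mul_inv_eq_iff_eq_mul_of_invertible, eq_comm (b := P), eq_comm (b := F)]
  exact and_congr_left fun hF => by rw [hF]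

theorem multistep_predictor_constrained_least_squares_general
    {ι κ o τ α R : Type*} [Fintype ι] [DecidableEq ι] [Fintype κ] [DecidableEq κ]
    [Fintype o] [Fintype τ] [LinearOrder α]
    [CommRing R] [NoZeroDivisors R] [PartialOrder R] [StarRing R] [StarOrderedRing R]
    (b : o → α) (c : κ → α)
    {L11 : Matrix ι ι R} {L21 : Matrix κ ι R} {L22 : Matrix κ κ R}
    {L31 : Matrix o ι R} {L32 : Matrix o κ R}
    {Q1 : Matrix ι τ R} {Q2 : Matrix κ τ R} {E : Matrix o τ R}
    (hL11 : IsUnit L11) (hL22 : IsUnit L22) (hL22_lower : IsBlockLowerTriangular c c L22)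
    (hQ11 : Q1 * Q1ᴴ = 1) (hQ22 : Q2 * Q2ᴴ = 1) (hQ12 : Q1 * Q2ᴴ = 0)
    (hE1 : E * Q1ᴴ = 0) (hE2 : E * Q2ᴴ = 0)
    {Z : Matrix ι τ R} {U : Matrix κ τ R} {Y : Matrix o τ R}
    (hZ : Z = L11 * Q1) (hU : U = L21 * Q1 + L22 * Q2) (hY : Y = L31 * Q1 + L32 * Q2 + E) :
    letI Fmlt := blockLowerPart b c L32 * L22⁻¹
    letI Pmlt := (L31 - Fmlt * L21) * L11⁻¹
    IsBlockLowerTriangular b c Fmlt ∧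
      ∀ (P : Matrix o ι R) (F : Matrix o κ R),
        IsBlockLowerTriangular b c F → (P, F) ≠ (Pmlt, Fmlt) →
        trace ((Y - Pmlt * Z - Fmlt * U)ᴴ * (Y - Pmlt * Z - Fmlt * U)) <
          trace ((Y - P * Z - F * U)ᴴ * (Y - P * Z - F * U)) := by
  have hB := isBlockLowerTriangular_blockLowerPart b c L32
  set B := blockLowerPart b c L32
  refine ⟨hB.mul (hL22_lower.inv hL22), fun P F hF hne => ?_⟩
  have hQ21 : Q2 * Q1ᴴ = 0 := by simpa using congrArg conjTranspose hQ12
  have residual_eq (P : Matrix o ι R) (F : Matrix o κ R) : Y - P * Z - F * U =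
      ((L32 - B) * Q2 + E) + ((L31 - P * L11 - F * L21) * Q1 + (B - F * L22) * Q2) := by
    simp only [hZ, hU, hY, Matrix.sub_mul, Matrix.mul_add, Matrix.mul_assoc]
    abel
  have vanish_iff := triangular_system_iff_eq_mul_inv hL11 hL22 L21 L31 (B := B)
  obtain ⟨hP_opt, hF_opt⟩ := (vanish_iff _ _).2 ⟨rfl, rfl⟩
  rw [residual_eq _ (B * L22⁻¹), residual_eq P F, hP_opt, hF_opt, Matrix.zero_mul,
    Matrix.zero_mul, add_zero, add_zero]
  apply trace_conjTranspose_mul_self_lt_add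
  · exact fun h_zero => hne <| Prod.ext_iff.2 <| (vanish_iff P F).1 <|
      eq_zero_and_eq_zero_of_mul_add_mul_eq_zero hQ11 hQ22 hQ12 hQ21 h_zero
  · rw [mul_add_mul_conjTranspose_of_orthonormal hQ22 hQ21 hE1 hE2]
    exact trace_sub_blockLowerPart_mul_conjTranspose L32 (hB.sub (hF.mul hL22_lower))

/-- Given an LQ decomposition with `L₁₁` invertible and `L₂₂` invertible and
block lower triangular, the multistep predictor `F_mlt = BLT(L₃₂) L₂₂⁻¹`,
`P_mlt = (L₃₁ − F_mlt L₂₁) L₁₁⁻¹` has `F_mlt` block lower triangular and `(P_mlt, F_mlt)` is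
the unique minimizer of `‖Ỹ − P Z̃ − F Ũ‖_Fro²` over all `P` and all block-lower-triangular
`F`. -/
theorem multistep_predictor_constrained_least_squares
    (nu ny m h n : ℕ) (hnu : 0 < nu) (hny : 0 < ny) (hm : 0 < m) (hh : 0 < h)
    (hn : m * (nu + ny) + h * nu + h * ny ≤ n)
    (L11 : Matrix (Fin m × (Fin nu ⊕ Fin ny)) (Fin m × (Fin nu ⊕ Fin ny)) ℝ)
    (L21 : Matrix (Fin h × Fin nu) (Fin m × (Fin nu ⊕ Fin ny)) ℝ)
    (L22 : Matrix (Fin h × Fin nu) (Fin h × Fin nu) ℝ)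
    (L31 : Matrix (Fin h × Fin ny) (Fin m × (Fin nu ⊕ Fin ny)) ℝ)
    (L32 : Matrix (Fin h × Fin ny) (Fin h × Fin nu) ℝ)
    (L33 : Matrix (Fin h × Fin ny) (Fin h × Fin ny) ℝ)
    (Q1 : Matrix (Fin m × (Fin nu ⊕ Fin ny)) (Fin n) ℝ)
    (Q2 : Matrix (Fin h × Fin nu) (Fin n) ℝ)
    (Q3 : Matrix (Fin h × Fin ny) (Fin n) ℝ)
    (hL11 : IsUnit L11) (hL22 : IsUnit L22) (hL22blt : BLTuu nu h L22)
    (hQ11 : Q1 * Q1ᵀ = 1) (hQ22 : Q2 * Q2ᵀ = 1) (hQ33 : Q3 * Q3ᵀ = 1)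
    (hQ12 : Q1 * Q2ᵀ = 0) (hQ13 : Q1 * Q3ᵀ = 0) (hQ23 : Q2 * Q3ᵀ = 0)
    (hQ21 : Q2 * Q1ᵀ = 0) (hQ31 : Q3 * Q1ᵀ = 0) (hQ32 : Q3 * Q2ᵀ = 0)
    (Z : Matrix (Fin m × (Fin nu ⊕ Fin ny)) (Fin n) ℝ)
    (U : Matrix (Fin h × Fin nu) (Fin n) ℝ)
    (Y : Matrix (Fin h × Fin ny) (Fin n) ℝ)
    (hZ : Z = L11 * Q1) (hU : U = L21 * Q1 + L22 * Q2)
    (hY : Y = L31 * Q1 + L32 * Q2 + L33 * Q3) :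
    letI Fmlt := bltOf nu ny h L32 * L22⁻¹
    letI Pmlt := (L31 - Fmlt * L21) * L11⁻¹
    (BLTyu nu ny h Fmlt ∧
      ∀ (P : Matrix (Fin h × Fin ny) (Fin m × (Fin nu ⊕ Fin ny)) ℝ)
        (F : Matrix (Fin h × Fin ny) (Fin h × Fin nu) ℝ),
        BLTyu nu ny h F → (P, F) ≠ (Pmlt, Fmlt) →
        Matrix.trace ((Y - Pmlt * Z - Fmlt * U)ᵀ * (Y - Pmlt * Z - Fmlt * U)) <
        Matrix.trace ((Y - P * Z - F * U)ᵀ * (Y - P * Z - F * U))) := by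
  exact multistep_predictor_constrained_least_squares_general
    (fun p : Fin h × Fin ny => (p.1 : ℕ)) (fun q : Fin h × Fin nu => (q.1 : ℕ))
    (E := L33 * Q3) hL11 hL22 hL22blt hQ11 hQ22 hQ12
    (by simp [Matrix.mul_assoc, hQ31]) (by simp [Matrix.mul_assoc, hQ32]) hZ hU hY
end

section
/- Let Q ∈ ℝ^{s×s} be symmetric positive definite, let λ > 0, and let F ∈ ℝ^{s×r} have full column rank. Then the block matrix [[Fᵀ Q F, Fᵀ Q], [Q F, Q + λ I_s]] ∈ ℝ^{(r+s)×(r+s)} is invertible. -/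
open Matrix Finset

/-!
The block matrix is the congruence `Bᴴ * diag(Q, Λ) * B` with `Λ = λ I` and `B = [[F, 1], [0, 1]]`.
The block diagonal matrix is positive definite and `B`, being block triangular with injective
diagonal blocks, is injective. So the block matrix is itself positive definite.
-/

theorem mulVec_fromBlocks_zero₂₁_injective {l m n o R : Type*} [Fintype l] [Fintype m]
    [NonUnitalNonAssocRing R] {A : Matrix n l R} {D : Matrix o m R}
    (hA : Function.Injective A.mulVec) (B : Matrix n m R) (hD : Function.Injective D.mulVec) :
    Function.Injective (fromBlocks A B 0 D).mulVec := by
  intro x y hxy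
  simp only [fromBlocks_mulVec, zero_mulVec, zero_add, Sum.elim_eq_iff] at hxy
  obtain ⟨h_top, h_bottom⟩ := hxy
  have h_inr : x ∘ Sum.inr = y ∘ Sum.inr := hD h_bottom
  have h_inl : x ∘ Sum.inl = y ∘ Sum.inl := by
    rw [h_inr] at h_top
    exact hA (add_right_cancel h_top)
  rw [← Sum.elim_comp_inl_inr x, h_inl, h_inr, Sum.elim_comp_inl_inr]

section PosDef

variable {m n R : Type*} [Ring R] [PartialOrder R] [StarRing R] [AddLeftMono R]

theorem posDef_fromBlocks_zero {A : Matrix m m R} {D : Matrix n n R}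
    (hA : A.PosDef) (hD : D.PosDef) : (fromBlocks A 0 0 D).PosDef := by
  refine ⟨hA.isHermitian.fromBlocks conjTranspose_zero hD.isHermitian, fun x hx ↦ ?_⟩
  obtain ⟨u, v, rfl⟩ : ∃ u v, x = Finsupp.sumElim u v :=
    ⟨_, _, (Finsupp.sumFinsuppEquivProdFinsupp.symm_apply_apply x).symm⟩
  have quadratic_form_eq :
      ((u.sumElim v).sum fun i xi ↦ (u.sumElim v).sum fun j xj ↦
        star xi * fromBlocks A 0 0 D i j * xj) =
      (u.sum fun i ui ↦ u.sum fun j uj ↦ star ui * A i j * uj) +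
        v.sum fun i vi ↦ v.sum fun j vj ↦ star vi * D i j * vj := by
    simp [Finsupp.sum_sumElim, Function.comp_def]
  rw [quadratic_form_eq]
  by_cases hu : u = 0
  · have hv : v ≠ 0 := by
      rintro rfl
      exact hx (by rw [hu, Finsupp.sumElim_zero_zero])
    exact add_pos_of_nonneg_of_pos (hA.posSemidef.2 u) (hD.2 hv)
  · exact add_pos_of_pos_of_nonneg (hA.2 hu) (hD.posSemidef.2 v)

theorem posDef_fromBlocks_conjTranspose_mul_mul_add [Fintype m] [Fintype n]
    {Q Λ : Matrix n n R} {F : Matrix n m R}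
    (hQ : Q.PosDef) (hΛ : Λ.PosDef) (hF : Function.Injective F.mulVec) :
    (fromBlocks (Fᴴ * Q * F) (Fᴴ * Q) (Q * F) (Q + Λ)).PosDef := by
  classical
  let B : Matrix (n ⊕ n) (m ⊕ n) R := fromBlocks F 1 0 1
  have hB : Function.Injective B.mulVec :=
    mulVec_fromBlocks_zero₂₁_injective hF 1 (mulVec_injective_of_isUnit isUnit_one)
  have congruence_eq : Bᴴ * fromBlocks Q 0 0 Λ * B =
      fromBlocks (Fᴴ * Q * F) (Fᴴ * Q) (Q * F) (Q + Λ) := by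
    simp [B, fromBlocks_conjTranspose, fromBlocks_multiply]
  rw [← congruence_eq]
  exact (posDef_fromBlocks_zero hQ hΛ).conjTranspose_mul_mul_same hB

end PosDef

theorem relax_and_regularize_block_matrix_invertible_general {m n K : Type*} [Fintype m]
    [Fintype n] [DecidableEq m] [DecidableEq n] [Field K] [PartialOrder K] [StarRing K]
    [AddLeftMono K] {Q Λ : Matrix n n K} {F : Matrix n m K}
    (hQ : Q.PosDef) (hΛ : Λ.PosDef) (hF : Function.Injective F.mulVec) :
    IsUnit (fromBlocks (Fᴴ * Q * F) (Fᴴ * Q) (Q * F) (Q + Λ)) :=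
  (posDef_fromBlocks_conjTranspose_mul_mul_add hQ hΛ hF).isUnit

/-- For `Q` symmetric positive definite, `λ > 0`, and `F` of full column
rank, the block matrix `[[Fᵀ Q F, Fᵀ Q], [Q F, Q + λ I]]` is invertible. -/
theorem relax_and_regularize_block_matrix_invertible
    (r s : ℕ) (hr : 0 < r) (hs : 0 < s) (hrs : r ≤ s)
    (Q : Matrix (Fin s) (Fin s) ℝ) (hQ : Q.PosDef)
    (lam : ℝ) (hlam : 0 < lam)
    (F : Matrix (Fin s) (Fin r) ℝ)
    (hF : ∀ u : Fin r → ℝ, F *ᵥ u = 0 → u = 0) :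
    IsUnit (Matrix.fromBlocks (Fᵀ * Q * F) (Fᵀ * Q) (Q * F) (Q + lam • (1 : Matrix (Fin s) (Fin s) ℝ))) := by
  rw [← conjTranspose_eq_transpose_of_trivial]
  exact relax_and_regularize_block_matrix_invertible_general hQ (PosDef.one.smul hlam)
    ((injective_iff_map_eq_zero F.mulVecLin).mpr hF)
end
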